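/- For every N there exist an integer n ≥ N, a finite set P ⊆ ℝ² of n points, and a finite set W₀ ⊆ ℝ² such that the witness Gabriel graph GG⁻(P,W₀) has at least one edge, and every finite set W ⊆ ℝ² with GG⁻(P,W) having the same edge set as GG⁻(P,W₀) satisfies |W| ≥ (3/2)·n − 8. -/

import Mathlib

/-!
Join a hub to the vertices of a very distant, very flat convex chain, and take as edges the spokes
to the vertices of even index; the spokes to those of odd index and the links between consecutive
vertices are to be non-edges. As the chain bulges away from the hub, the disk of a spoke contains
everything the disks of a spoke on its left and of one on its right have in common. In the direction
of any point of the disk of a link, each vertex reaches farther than the next, so such a point, if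
it lies in the disk of a spoke, lies in the disk of the preceding spoke too. The disks of adjacent
links meet inside the disk of the spoke between them, and those of other links do not meet at all.
Hence the disks of any two of the non-edges meet only inside disks of edges, where there is no
witness, and so each non-edge needs a witness of its own. With `2m + 3` points this makes
`(m + 1) + (2m + 1) = 3m + 2` witnesses.
-/

open scoped RealInnerProductSpace

noncomputable section

/-- The Euclidean plane. -/
abbrev Pt := EuclideanSpace ℝ (Fin 2)

/-- The closed disk with diameter `ab`. -/
def diskD (a b : Pt) : Set Pt := Metric.closedBall (midpoint ℝ a b) (dist a b / 2)

/-- `a` and `b` are adjacent in the witness Gabriel graph with witness set `W`. -/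
def gabrielEdge (W : Set Pt) (a b : Pt) : Prop := (diskD a b \ {a, b}) ∩ W = ∅

/-- General position: no three points collinear, no four points concyclic. -/
def GenPos (S : Set Pt) : Prop :=
  (∀ a ∈ S, ∀ b ∈ S, ∀ c ∈ S, a ≠ b → a ≠ c → b ≠ c → ¬ Collinear ℝ ({a, b, c} : Set Pt)) ∧
  (∀ a ∈ S, ∀ b ∈ S, ∀ c ∈ S, ∀ d ∈ S, a ≠ b → a ≠ c → a ≠ d → b ≠ c → b ≠ d → c ≠ d →
    ¬ EuclideanGeometry.Cospherical ({a, b, c, d} : Set Pt))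

/-- Planar determinant `u₁v₂ − u₂v₁`. -/
def det2 (u v : Pt) : ℝ := u 0 * v 1 - u 1 * v 0

/-- Counterclockwise convex position. -/
def CCWConvexPos {m : ℕ} (q : Fin m → Pt) : Prop :=
  ∀ i j k : Fin m, i < j → j < k → 0 < det2 (q j - q i) (q k - q i)

/-- Cyclic successor in `Fin m`. -/
def cyclicSucc {m : ℕ} (hm : 0 < m) (i : Fin m) : Fin m :=
  ⟨((i : ℕ) + 1) % m, Nat.mod_lt _ hm⟩

section Cone

variable {E : Type*} [NormedAddCommGroup E] [InnerProductSpace ℝ E] {a b c w : E}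

lemma mem_closedBall_midpoint_iff_inner_nonpos :
    w ∈ Metric.closedBall (midpoint ℝ a b) (dist a b / 2) ↔ ⟪w - a, w - b⟫ ≤ 0 := by
  have hcenter : dist w (midpoint ℝ a b) = ‖(w - a) + (w - b)‖ / 2 := by
    have : w - midpoint ℝ a b = (2⁻¹ : ℝ) • ((w - a) + (w - b)) := by
      rw [midpoint_eq_smul_add, invOf_eq_inv]
      module
    rw [dist_eq_norm, this, norm_smul, Real.norm_of_nonneg (by norm_num), inv_mul_eq_div]
  have hradius : dist a b = ‖(w - a) - (w - b)‖ := by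
    rw [sub_sub_sub_cancel_left, dist_eq_norm']
  rw [Metric.mem_closedBall, hcenter, hradius, div_le_div_iff_of_pos_right two_pos,
    ← sq_le_sq₀ (norm_nonneg _) (norm_nonneg _), norm_add_sq_real (w - a) (w - b),
    norm_sub_sq_real (w - a) (w - b)]
  constructor <;> intro h <;> linarith

/-- `c` lies in the cone spanned by `a` and `b`, on or beyond the segment `ab` as seen from the
origin, so that the disk `D(0, c)` contains `D(0, a) ∩ D(0, b)`. -/
def IsBeyondSegment (a b c : E) : Prop :=
  ∃ s t : ℝ, 0 ≤ s ∧ 0 ≤ t ∧ 1 ≤ s + t ∧ c = s • a + t • b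

lemma IsBeyondSegment.inner_sub_nonpos (hc : IsBeyondSegment a b c)
    (ha : ⟪w, w - a⟫ ≤ 0) (hb : ⟪w, w - b⟫ ≤ 0) : ⟪w, w - c⟫ ≤ 0 := by
  obtain ⟨s, t, hs, ht, hst, rfl⟩ := hc
  have hexpand : ⟪w, w - (s • a + t • b)⟫ =
      s * ⟪w, w - a⟫ + t * ⟪w, w - b⟫ - (s + t - 1) * ⟪w, w⟫ := by
    simp only [inner_sub_right, inner_add_right, real_inner_smul_right]
    ring
  have := mul_nonneg (sub_nonneg.2 hst) (real_inner_self_nonneg (x := w))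
  have := mul_nonpos_of_nonneg_of_nonpos hs ha
  have := mul_nonpos_of_nonneg_of_nonpos ht hb
  linarith

lemma IsBeyondSegment.inner_sub_nonpos_of_adjacent (hc : IsBeyondSegment a b c)
    (hac : ⟪w - a, w - c⟫ ≤ 0) (hcb : ⟪w - c, w - b⟫ ≤ 0) : ⟪w, w - c⟫ ≤ 0 := by
  obtain ⟨s, t, hs, ht, hst, hc⟩ := hc
  have hcombine : ⟪w - c, w - c⟫ + (s + t - 1) * ⟪w, w - c⟫ =
      s * ⟪w - a, w - c⟫ + t * ⟪w - c, w - b⟫ := by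
    rw [real_inner_comm (w - b), ← real_inner_smul_left, ← real_inner_smul_left,
      ← real_inner_smul_left, ← inner_add_left, ← inner_add_left]
    congr 1
    nth_rw 1 [hc]
    module
  have := mul_nonpos_of_nonneg_of_nonpos hs hac
  have := mul_nonpos_of_nonneg_of_nonpos ht hcb
  by_contra! hpos
  have := mul_nonneg (sub_nonneg.2 hst) hpos.le
  have hzero : w - c = 0 := by
    rw [← real_inner_self_nonpos]
    linarith
  simp [hzero] at hpos

end Cone

lemma card_le_card_of_pairwise_inter_subset {α ι : Type*} [Fintype ι] {D : ι → Set α}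
    {F : Set α} {W : Finset α} (hF : Disjoint F W) (hW : ∀ i, ¬ Disjoint (D i) W)
    (hD : Pairwise fun i j => D i ∩ D j ⊆ F) : Fintype.card ι ≤ W.card := by
  choose w hwD hwW using fun i => Set.not_disjoint_iff.1 (hW i)
  have hw : Function.Injective w := fun i j hij => by
    by_contra hne
    exact Set.disjoint_left.1 hF (hD hne ⟨hwD i, hij ▸ hwD j⟩) (hwW i)
  exact Finset.card_le_card_of_injOn w (fun i _ => hwW i) hw.injOn

/-- The part of the disk `D(a, b)` in which a witness destroys the edge `ab`. -/
def puncturedDisk (a b : Pt) : Set Pt := diskD a b \ {a, b}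

lemma gabrielEdge_iff_disjoint {W : Set Pt} {a b : Pt} :
    gabrielEdge W a b ↔ Disjoint (puncturedDisk a b) W :=
  Set.disjoint_iff_inter_eq_empty.symm

lemma mem_puncturedDisk {a b w : Pt} :
    w ∈ puncturedDisk a b ↔ ⟪w - a, w - b⟫ ≤ 0 ∧ w ≠ a ∧ w ≠ b := by
  rw [puncturedDisk, diskD, Set.mem_sdiff, mem_closedBall_midpoint_iff_inner_nonpos]
  simp only [Set.mem_insert_iff, Set.mem_singleton_iff, not_or]

/-- The vertices of the fan, whose hub is the origin: points of a parabola so flat and so far from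
the hub (for large `L`) that spokes are almost parallel and the curve is almost a straight line. -/
def fanVertex (L : ℝ) (k : ℕ) : Pt := !₂[L * k, L ^ 3 - (k : ℝ) ^ 2]

/-- The spoke from the hub to the `k`-th vertex of the fan, represented by its punctured disk. -/
def spokeDisk (L : ℝ) (k : ℕ) : Set Pt := puncturedDisk 0 (fanVertex L k)

/-- The link between consecutive vertices of the fan, represented by its punctured disk. -/
def linkDisk (L : ℝ) (k : ℕ) : Set Pt := puncturedDisk (fanVertex L k) (fanVertex L (k + 1))

section Fan

variable {L : ℝ} {i j k m s t : ℕ} {w : Pt}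

lemma fanVertex_apply_zero : fanVertex L k 0 = L * k := rfl

lemma fanVertex_apply_one : fanVertex L k 1 = L ^ 3 - (k : ℝ) ^ 2 := rfl

lemma fanVertex_injective (hL : L ≠ 0) : Function.Injective (fanVertex L) := fun j k h => by
  simpa [fanVertex_apply_zero, hL] using congrArg (· 0) h

lemma fanVertex_ne_zero (hL : L ≠ 0) : fanVertex L k ≠ 0 := fun h => by
  have hk : k = 0 := by simpa [fanVertex_apply_zero, hL] using congrArg (· 0) h
  simpa [fanVertex_apply_one, hk, hL] using congrArg (· 1) h

lemma inner_sub_fanVertex :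
    ⟪w, w - fanVertex L k⟫ = w 0 * (w 0 - L * k) + w 1 * (w 1 - (L ^ 3 - (k : ℝ) ^ 2)) := by
  simp [fanVertex, PiLp.inner_apply, mul_comm]

lemma mem_spokeDisk :
    w ∈ spokeDisk L k ↔ ⟪w, w - fanVertex L k⟫ ≤ 0 ∧ w ≠ 0 ∧ w ≠ fanVertex L k := by
  rw [spokeDisk, mem_puncturedDisk, sub_zero]

lemma mem_linkDisk :
    w ∈ linkDisk L k ↔ ⟪w - fanVertex L k, w - fanVertex L (k + 1)⟫ ≤ 0 ∧
      w ≠ fanVertex L k ∧ w ≠ fanVertex L (k + 1) :=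
  mem_puncturedDisk

lemma inner_sub_fanVertex_sub_fanVertex_succ :
    ⟪w - fanVertex L k, w - fanVertex L (k + 1)⟫ =
      (w 0 - L * k) * (w 0 - L * (k + 1)) +
        (w 1 - (L ^ 3 - (k : ℝ) ^ 2)) * (w 1 - (L ^ 3 - ((k : ℝ) + 1) ^ 2)) := by
  simp [fanVertex, PiLp.inner_apply, mul_comm]

lemma isBeyondSegment_fanVertex (hL : 0 < L) (hij : i < j) (hjk : j < k) :
    IsBeyondSegment (fanVertex L i) (fanVertex L k) (fanVertex L j) := by
  have hij' : (0 : ℝ) < j - i := sub_pos.2 (by exact_mod_cast hij)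
  have hjk' : (0 : ℝ) < k - j := sub_pos.2 (by exact_mod_cast hjk)
  have hik' : (0 : ℝ) < k - i := by linarith
  -- Cramer's rule: the vertices `i`, `k` span a parallelogram of area `L * (k - i) * (L³ + i * k)`.
  refine ⟨(k - j) * (L ^ 3 + j * k) / ((k - i) * (L ^ 3 + i * k)),
    (j - i) * (L ^ 3 + i * j) / ((k - i) * (L ^ 3 + i * k)), by positivity, by positivity, ?_, ?_⟩
  · have hexcess : ((k : ℝ) - j) * (L ^ 3 + j * k) + (j - i) * (L ^ 3 + i * j) =
        (k - i) * (L ^ 3 + i * k) + (j - i) * (k - j) * (k - i) := by ring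
    rw [← add_div, one_le_div (by positivity), hexcess]
    exact le_add_of_nonneg_right (by positivity)
  · ext r
    fin_cases r <;>
      simp only [fanVertex_apply_zero, fanVertex_apply_one, PiLp.add_apply, PiLp.smul_apply,
        smul_eq_mul, Fin.zero_eta, Fin.mk_one] <;> field_simp <;> ring

lemma inner_fanVertex_sub_fanVertex_pos (hjk : j < k) (hk : 4 * (k : ℝ) ^ 2 ≤ L) :
    0 < ⟪fanVertex L j, fanVertex L j - fanVertex L k⟫ := by
  have hjk' : (j : ℝ) + 1 ≤ k := by exact_mod_cast hjk
  have hfactor : ⟪fanVertex L j, fanVertex L j - fanVertex L k⟫ =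
      (k - j) * ((L ^ 3 - (j : ℝ) ^ 2) * (k + j) - L ^ 2 * j) := by
    rw [inner_sub_fanVertex, fanVertex_apply_zero, fanVertex_apply_one]
    ring
  have hL : 4 ≤ L := by nlinarith [j.cast_nonneg (α := ℝ)]
  have hheight : L ^ 2 < L ^ 3 - (j : ℝ) ^ 2 := by
    nlinarith [sq_nonneg L, j.cast_nonneg (α := ℝ)]
  rw [hfactor]
  refine mul_pos (by linarith) (sub_pos.2 ?_)
  calc L ^ 2 * j ≤ L ^ 2 * (k + j) := by gcongr; linarith
    _ < (L ^ 3 - (j : ℝ) ^ 2) * (k + j) := by gcongr; linarith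

lemma spokeDisk_inter_spokeDisk_subset (hij : i < j) (hjk : j < k) (hk : 4 * (k : ℝ) ^ 2 ≤ L) :
    spokeDisk L i ∩ spokeDisk L k ⊆ spokeDisk L j := by
  rintro w ⟨hwi, hwk⟩
  rw [mem_spokeDisk] at hwi hwk ⊢
  have hk' : (0 : ℝ) < k := by exact_mod_cast (by omega : 0 < k)
  refine ⟨(isBeyondSegment_fanVertex (by nlinarith) hij hjk).inner_sub_nonpos hwi.1 hwk.1,
    hwk.2.1, ?_⟩
  rintro rfl
  exact (inner_fanVertex_sub_fanVertex_pos hjk hk).not_ge hwk.1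

lemma bounds_of_mem_linkDisk (hk : 4 * ((k : ℝ) + 1) ^ 2 ≤ L) (hw : w ∈ linkDisk L k) :
    L * (k - 1 / 2) < w 0 ∧ w 0 < L * (k + 3 / 2) ∧ L ^ 3 - 2 * L ≤ w 1 := by
  have hinner := (mem_linkDisk.1 hw).1
  rw [inner_sub_fanVertex_sub_fanVertex_succ] at hinner
  have hdrop : (2 * (k : ℝ) + 1) ^ 2 ≤ L ^ 2 := by gcongr; nlinarith [k.cast_nonneg (α := ℝ)]
  have hhoriz : -(L ^ 2 / 4) ≤ (w 0 - L * k) * (w 0 - L * (k + 1)) := by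
    linarith [sq_nonneg (w 0 - L * (k + 1 / 2))]
  have hvert : -(L ^ 2 / 4) ≤
      (w 1 - (L ^ 3 - (k : ℝ) ^ 2)) * (w 1 - (L ^ 3 - ((k : ℝ) + 1) ^ 2)) := by
    linarith [sq_nonneg (w 1 - (L ^ 3 - ((k : ℝ) ^ 2 + ((k : ℝ) + 1) ^ 2) / 2))]
  refine ⟨?_, ?_, ?_⟩ <;> by_contra! hout <;> nlinarith

lemma ordinate_pos_of_mem_linkDisk (hk : 4 * ((k : ℝ) + 1) ^ 2 ≤ L) (hw : w ∈ linkDisk L k) :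
    0 < w 1 := by
  have hL : 4 ≤ L := by nlinarith [k.cast_nonneg (α := ℝ)]
  calc 0 < L ^ 3 - 2 * L := by nlinarith [mul_nonneg (sub_nonneg.2 hL) (by linarith : 0 ≤ L)]
    _ ≤ w 1 := (bounds_of_mem_linkDisk hk hw).2.2

lemma mul_abscissa_le_ordinate_of_mem_linkDisk (hk : 4 * ((k : ℝ) + 1) ^ 2 ≤ L)
    (hw : w ∈ linkDisk L k) : L * w 0 ≤ w 1 := by
  have hL : 4 ≤ L := by nlinarith [k.cast_nonneg (α := ℝ)]
  have hkL : (k : ℝ) + 3 / 2 ≤ L / 4 + 1 / 2 := by nlinarith [k.cast_nonneg (α := ℝ)]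
  have hLL : 0 ≤ (L - 4) * L := mul_nonneg (by linarith) (by linarith)
  obtain ⟨-, hright, hheight⟩ := bounds_of_mem_linkDisk hk hw
  calc L * w 0 ≤ L * (L * (k + 3 / 2)) := by gcongr
    _ ≤ L * (L * (L / 4 + 1 / 2)) := by gcongr
    _ ≤ L ^ 3 - 2 * L := by nlinarith
    _ ≤ w 1 := hheight

lemma linkDisk_inter_spokeDisk_succ_subset (hj : 4 * ((j : ℝ) + 1) ^ 2 ≤ L)
    (hk : 4 * ((k : ℝ) + 1) ^ 2 ≤ L) :
    linkDisk L j ∩ spokeDisk L (k + 1) ⊆ spokeDisk L k := by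
  rintro w ⟨hwj, hwk⟩
  rw [mem_spokeDisk] at hwk ⊢
  have hsteep := mul_abscissa_le_ordinate_of_mem_linkDisk hj hwj
  have hpos := ordinate_pos_of_mem_linkDisk hj hwj
  have hstep : ⟪w, w - fanVertex L k⟫ =
      ⟪w, w - fanVertex L (k + 1)⟫ - (2 * k * w 1 + (w 1 - L * w 0)) := by
    rw [inner_sub_fanVertex, inner_sub_fanVertex]
    push_cast
    ring
  have : 0 ≤ 2 * k * w 1 := by positivity
  refine ⟨by linarith [hwk.1], hwk.2.1, ?_⟩
  rintro rfl
  refine (inner_fanVertex_sub_fanVertex_pos k.lt_succ_self ?_).not_ge hwk.1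
  exact_mod_cast hk

lemma linkDisk_inter_linkDisk_succ_subset (hk : 4 * ((k : ℝ) + 2) ^ 2 ≤ L) :
    linkDisk L k ∩ linkDisk L (k + 1) ⊆ spokeDisk L (k + 1) := by
  rintro w ⟨hwk, hwk'⟩
  have hk' : 4 * ((k : ℝ) + 1) ^ 2 ≤ L := le_trans (by gcongr; norm_num) hk
  have hL : 0 < L := lt_of_lt_of_le (by positivity) hk'
  have hhub : w ≠ 0 := by
    rintro rfl
    exact (ordinate_pos_of_mem_linkDisk hk' hwk).ne rfl
  rw [mem_linkDisk] at hwk hwk'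
  exact mem_spokeDisk.2 ⟨(isBeyondSegment_fanVertex hL k.lt_succ_self
    (k + 1).lt_succ_self).inner_sub_nonpos_of_adjacent hwk.1 hwk'.1, hhub, hwk.2.2⟩

lemma disjoint_linkDisk_linkDisk (hjk : j + 2 ≤ k) (hk : 4 * ((k : ℝ) + 1) ^ 2 ≤ L) :
    Disjoint (linkDisk L j) (linkDisk L k) := by
  refine Set.disjoint_left.2 fun w hwj hwk => ?_
  have hjk' : (j : ℝ) + 2 ≤ k := by exact_mod_cast hjk
  have hj : 4 * ((j : ℝ) + 1) ^ 2 ≤ L := le_trans (by gcongr; linarith) hk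
  have hL : 0 ≤ L := le_trans (by positivity) hk
  refine lt_irrefl (w 0) ?_
  calc w 0 < L * (j + 3 / 2) := (bounds_of_mem_linkDisk hj hwj).2.1
    _ ≤ L * (k - 1 / 2) := by gcongr; linarith
    _ < w 0 := (bounds_of_mem_linkDisk hk hwk).1

/-- The foot of the perpendicular from the hub to the tangent of the parabola at `fanVertex L k`;
it witnesses against the `k`-th spoke and no other. -/
def spokeWitness (L : ℝ) (k : ℕ) : Pt :=
  (L * (L ^ 3 + (k : ℝ) ^ 2) / (L ^ 2 + 4 * (k : ℝ) ^ 2)) • !₂[2 * (k : ℝ), L]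

/-- A point above the midpoint of the `k`-th link, in the disk of that link but beyond the disks
of all spokes. -/
def linkWitness (L : ℝ) (k : ℕ) : Pt :=
  !₂[L * (k + 1 / 2), L ^ 3 - ((k : ℝ) ^ 2 + ((k : ℝ) + 1) ^ 2) / 2 + L / 2]

lemma spokeWitness_apply_zero : spokeWitness L k 0 =
    L * (L ^ 3 + (k : ℝ) ^ 2) / (L ^ 2 + 4 * (k : ℝ) ^ 2) * (2 * k) := rfl

lemma spokeWitness_apply_one : spokeWitness L k 1 =
    L * (L ^ 3 + (k : ℝ) ^ 2) / (L ^ 2 + 4 * (k : ℝ) ^ 2) * L := rfl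

lemma linkWitness_apply_zero : linkWitness L k 0 = L * (k + 1 / 2) := rfl

lemma linkWitness_apply_one : linkWitness L k 1 =
    L ^ 3 - ((k : ℝ) ^ 2 + ((k : ℝ) + 1) ^ 2) / 2 + L / 2 := rfl

lemma inner_spokeWitness_sub_fanVertex (hL : 0 < L) :
    ⟪spokeWitness L k, spokeWitness L k - fanVertex L j⟫ =
      L ^ 2 * (L ^ 3 + (k : ℝ) ^ 2) / (L ^ 2 + 4 * (k : ℝ) ^ 2) * ((j : ℝ) - k) ^ 2 := by
  rw [inner_sub_fanVertex, spokeWitness_apply_zero, spokeWitness_apply_one]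
  field_simp
  ring

lemma spokeWitness_mem_spokeDisk (hk : 0 < k) (hkL : 4 * (k : ℝ) ^ 2 ≤ L) :
    spokeWitness L k ∈ spokeDisk L k := by
  have hk1 : (1 : ℝ) ≤ k := by exact_mod_cast hk
  have hL : 4 ≤ L := by nlinarith
  have hright : L * k < spokeWitness L k 0 := by
    have hfactor : L ^ 2 + 4 * (k : ℝ) ^ 2 < 2 * (L ^ 3 + (k : ℝ) ^ 2) := by nlinarith [sq_nonneg L]
    rw [spokeWitness_apply_zero, div_mul_eq_mul_div, lt_div_iff₀ (by positivity)]
    have := mul_lt_mul_of_pos_left hfactor (by positivity : 0 < L * k)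
    linarith
  refine mem_spokeDisk.2 ⟨?_, ?_, ?_⟩
  · simp [inner_spokeWitness_sub_fanVertex (by linarith : 0 < L)]
  · intro h
    rw [h, PiLp.zero_apply] at hright
    exact hright.not_ge (by positivity)
  · intro h
    rw [h, fanVertex_apply_zero] at hright
    exact hright.false

lemma spokeWitness_notMem_spokeDisk (hL : 0 < L) (hjk : j ≠ k) :
    spokeWitness L k ∉ spokeDisk L j := by
  rw [mem_spokeDisk, inner_spokeWitness_sub_fanVertex hL]
  have : (j : ℝ) - k ≠ 0 := sub_ne_zero.2 (by exact_mod_cast hjk)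
  exact fun h => h.1.not_gt (by positivity)

lemma linkWitness_mem_linkDisk (hL : 0 < L) : linkWitness L k ∈ linkDisk L k := by
  refine mem_linkDisk.2 ⟨?_, fun h => ?_, fun h => ?_⟩
  · rw [inner_sub_fanVertex_sub_fanVertex_succ]
    rw [linkWitness_apply_zero, linkWitness_apply_one]
    linarith [sq_nonneg (2 * (k : ℝ) + 1)]
  all_goals
    have habscissa := congrArg (· 0) h
    simp [linkWitness_apply_zero, fanVertex_apply_zero, hL.ne'] at habscissa

lemma linkWitness_notMem_spokeDisk (hk : 4 * ((k : ℝ) + 1) ^ 2 ≤ L) (hj : 4 * (j : ℝ) ^ 2 ≤ L) :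
    linkWitness L k ∉ spokeDisk L j := by
  have hL : 4 ≤ L := by nlinarith [k.cast_nonneg (α := ℝ)]
  set x := linkWitness L k 0
  set y := linkWitness L k 1 with hy
  have hrise : L / 4 ≤ y - L ^ 3 := by
    rw [hy, linkWitness_apply_one]
    nlinarith [k.cast_nonneg (α := ℝ)]
  have hy0 : 0 ≤ y := by
    have : 0 ≤ L ^ 3 := by positivity
    linarith
  have hvert : L ^ 3 * (L / 4) ≤ y * (y - (L ^ 3 - (j : ℝ) ^ 2)) :=
    mul_le_mul (by linarith) (by linarith [sq_nonneg (j : ℝ)]) (by positivity) hy0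
  have hhoriz : -(L ^ 2 * (L / 16)) ≤ x * (x - L * j) := by
    have hj' : L ^ 2 * ((j : ℝ) ^ 2 / 4) ≤ L ^ 2 * (L / 16) :=
      mul_le_mul_of_nonneg_left (by linarith) (sq_nonneg L)
    linarith [sq_nonneg (2 * x - L * j)]
  have hgap : L ^ 2 * (L / 16) < L ^ 3 * (L / 4) :=
    calc L ^ 2 * (L / 16) = L ^ 3 * (1 / 16) := by ring
      _ < L ^ 3 * (L / 4) := mul_lt_mul_of_pos_left (by linarith) (by positivity)
  rw [mem_spokeDisk, inner_sub_fanVertex]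
  exact fun h => h.1.not_gt (by linarith)

/-- The union of the punctured disks of the spokes that are edges: those to the vertices of even
index. -/
def fanEdgeRegion (L : ℝ) (m : ℕ) : Set Pt := ⋃ t : Fin (m + 1), spokeDisk L (2 * t)

/-- The punctured disks of the non-edges that each need a witness of their own: the spokes to the
vertices of odd index, and all links. -/
def fanNonedgeDisk (L : ℝ) (m : ℕ) : Fin (m + 1) ⊕ Fin (2 * m + 1) → Set Pt :=
  Sum.elim (fun t => spokeDisk L (2 * t + 1)) (fun k => linkDisk L k)

/-- The hub and the first `2 * m + 2` vertices of the fan. -/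
def fanPoints (L : ℝ) (m : ℕ) : Finset Pt :=
  insert 0 ((Finset.range (2 * m + 2)).image (fanVertex L))

/-- One witness for each of the disks in `fanNonedgeDisk L m`. -/
def fanWitnesses (L : ℝ) (m : ℕ) : Finset Pt :=
  (Finset.range (m + 1)).image (fun t => spokeWitness L (2 * t + 1)) ∪
    (Finset.range (2 * m + 1)).image (linkWitness L)

lemma four_mul_sq_le_of_le {n : ℕ} (hL : 4 * (n : ℝ) ^ 2 ≤ L) (hk : k ≤ n) :
    4 * (k : ℝ) ^ 2 ≤ L :=
  le_trans (by gcongr) hL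

lemma pos_of_four_mul_sq_le (hL : 4 * ((2 * m + 1 : ℕ) : ℝ) ^ 2 ≤ L) : 0 < L :=
  lt_of_lt_of_le (by positivity) hL

lemma card_fanPoints (hL : L ≠ 0) : (fanPoints L m).card = 2 * m + 3 := by
  have hhub : (0 : Pt) ∉ (Finset.range (2 * m + 2)).image (fanVertex L) := by
    simp [fanVertex_ne_zero hL]
  rw [fanPoints, Finset.card_insert_of_notMem hhub,
    Finset.card_image_of_injective _ (fanVertex_injective hL), Finset.card_range]

lemma fanVertex_mem_fanPoints (hk : k < 2 * m + 2) : fanVertex L k ∈ fanPoints L m :=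
  Finset.mem_insert_of_mem (Finset.mem_image_of_mem _ (Finset.mem_range.2 hk))

lemma spokeDisk_subset_fanEdgeRegion (hk : k ≤ 2 * m) (heven : Even k) :
    spokeDisk L k ⊆ fanEdgeRegion L m := by
  obtain ⟨t, rfl⟩ := heven.two_dvd
  exact Set.subset_iUnion (fun t : Fin (m + 1) => spokeDisk L (2 * t)) ⟨t, by omega⟩

lemma odd_spokeDisk_inter_odd_spokeDisk_subset (hL : 4 * ((2 * m + 1 : ℕ) : ℝ) ^ 2 ≤ L)
    (hst : s < t) (ht : t ≤ m) :
    spokeDisk L (2 * s + 1) ∩ spokeDisk L (2 * t + 1) ⊆ fanEdgeRegion L m :=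
  (spokeDisk_inter_spokeDisk_subset (by omega) (2 * t).lt_succ_self
    (four_mul_sq_le_of_le hL (by omega))).trans
    (spokeDisk_subset_fanEdgeRegion (by omega) (even_two_mul t))

lemma linkDisk_inter_odd_spokeDisk_subset (hL : 4 * ((2 * m + 1 : ℕ) : ℝ) ^ 2 ≤ L)
    (hk : k ≤ 2 * m) (ht : t ≤ m) :
    linkDisk L k ∩ spokeDisk L (2 * t + 1) ⊆ fanEdgeRegion L m :=
  (linkDisk_inter_spokeDisk_succ_subset
    (by exact_mod_cast four_mul_sq_le_of_le hL (Nat.succ_le_succ hk))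
    (by exact_mod_cast four_mul_sq_le_of_le hL (by omega : 2 * t + 1 ≤ 2 * m + 1))).trans
    (spokeDisk_subset_fanEdgeRegion (by omega) (even_two_mul t))

lemma linkDisk_inter_linkDisk_subset (hL : 4 * ((2 * m + 1 : ℕ) : ℝ) ^ 2 ≤ L)
    (hjk : j < k) (hk : k ≤ 2 * m) :
    linkDisk L j ∩ linkDisk L k ⊆ fanEdgeRegion L m := by
  have hk' : 4 * ((k : ℝ) + 1) ^ 2 ≤ L := by
    exact_mod_cast four_mul_sq_le_of_le hL (Nat.succ_le_succ hk)
  obtain rfl | hfar : k = j + 1 ∨ j + 2 ≤ k := by omega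
  · have hsucc : linkDisk L j ∩ linkDisk L (j + 1) ⊆ spokeDisk L (j + 1) :=
      linkDisk_inter_linkDisk_succ_subset
        (by exact_mod_cast four_mul_sq_le_of_le hL (Nat.succ_le_succ hk))
    rcases j.even_or_odd with heven | hodd
    · have hj : 4 * ((j : ℝ) + 1) ^ 2 ≤ L := by
        exact_mod_cast four_mul_sq_le_of_le hL (by omega : j + 1 ≤ 2 * m + 1)
      exact fun w hw => spokeDisk_subset_fanEdgeRegion (by omega) heven
        (linkDisk_inter_spokeDisk_succ_subset hj hj ⟨hw.1, hsucc hw⟩)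
    · exact hsucc.trans (spokeDisk_subset_fanEdgeRegion hk hodd.add_one)
  · rw [(disjoint_linkDisk_linkDisk hfar hk').inter_eq]
    exact Set.empty_subset _

lemma pairwise_fanNonedgeDisk_inter_subset (hL : 4 * ((2 * m + 1 : ℕ) : ℝ) ^ 2 ≤ L) :
    Pairwise fun i j => fanNonedgeDisk L m i ∩ fanNonedgeDisk L m j ⊆ fanEdgeRegion L m := by
  rintro (s | j) (t | k) hne
  · rcases lt_or_gt_of_ne (fun h => hne (congrArg Sum.inl h)) with hst | hts
    · exact odd_spokeDisk_inter_odd_spokeDisk_subset hL hst t.is_le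
    · rw [Set.inter_comm]
      exact odd_spokeDisk_inter_odd_spokeDisk_subset hL hts s.is_le
  · rw [Set.inter_comm]
    exact linkDisk_inter_odd_spokeDisk_subset hL k.is_le s.is_le
  · exact linkDisk_inter_odd_spokeDisk_subset hL j.is_le t.is_le
  · rcases lt_or_gt_of_ne (fun h => hne (congrArg Sum.inr h)) with hjk | hkj
    · exact linkDisk_inter_linkDisk_subset hL hjk k.is_le
    · rw [Set.inter_comm]
      exact linkDisk_inter_linkDisk_subset hL hkj j.is_le

lemma disjoint_fanEdgeRegion_fanWitnesses (hL : 4 * ((2 * m + 1 : ℕ) : ℝ) ^ 2 ≤ L) :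
    Disjoint (fanEdgeRegion L m) (fanWitnesses L m) := by
  refine Set.disjoint_iUnion_left.2 fun t => Set.disjoint_right.2 fun w hw => ?_
  simp only [fanWitnesses, Finset.coe_union, Finset.coe_image, Finset.coe_range] at hw
  rcases hw with ⟨s, -, rfl⟩ | ⟨k, hk, rfl⟩
  · exact spokeWitness_notMem_spokeDisk (pos_of_four_mul_sq_le hL) (by omega)
  · exact linkWitness_notMem_spokeDisk
      (by exact_mod_cast four_mul_sq_le_of_le hL (Nat.succ_le_of_lt hk))
      (four_mul_sq_le_of_le hL (by omega))

lemma not_disjoint_fanNonedgeDisk_fanWitnesses (hL : 4 * ((2 * m + 1 : ℕ) : ℝ) ^ 2 ≤ L)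
    (i : Fin (m + 1) ⊕ Fin (2 * m + 1)) :
    ¬ Disjoint (fanNonedgeDisk L m i) (fanWitnesses L m) := by
  rcases i with t | k
  · exact Set.not_disjoint_iff.2 ⟨_,
      spokeWitness_mem_spokeDisk (Nat.succ_pos _) (four_mul_sq_le_of_le hL (by omega)),
      Finset.mem_union_left _ (Finset.mem_image_of_mem _ (Finset.mem_range.2 t.isLt))⟩
  · exact Set.not_disjoint_iff.2 ⟨_, linkWitness_mem_linkDisk (pos_of_four_mul_sq_le hL),
      Finset.mem_union_right _ (Finset.mem_image_of_mem _ (Finset.mem_range.2 k.isLt))⟩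

lemma three_mul_add_two_le_card (hL : 4 * ((2 * m + 1 : ℕ) : ℝ) ^ 2 ≤ L) {W : Finset Pt}
    (hspoke : ∀ k < 2 * m + 2,
      Disjoint (spokeDisk L k) W ↔ Disjoint (spokeDisk L k) (fanWitnesses L m))
    (hlink : ∀ k < 2 * m + 1,
      Disjoint (linkDisk L k) W ↔ Disjoint (linkDisk L k) (fanWitnesses L m)) :
    3 * m + 2 ≤ W.card := by
  have hedge : Disjoint (fanEdgeRegion L m) W := Set.disjoint_iUnion_left.2 fun t =>
    (hspoke _ (by omega)).2
      (Set.disjoint_iUnion_left.1 (disjoint_fanEdgeRegion_fanWitnesses hL) t)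
  have hnonedge (i) : ¬ Disjoint (fanNonedgeDisk L m i) W := by
    have hi := not_disjoint_fanNonedgeDisk_fanWitnesses hL i
    rcases i with t | k
    · exact mt (hspoke _ (by omega)).1 hi
    · exact mt (hlink _ k.isLt).1 hi
  calc 3 * m + 2 = Fintype.card (Fin (m + 1) ⊕ Fin (2 * m + 1)) := by
        rw [Fintype.card_sum, Fintype.card_fin, Fintype.card_fin]
        ring
    _ ≤ W.card := card_le_card_of_pairwise_inter_subset hedge hnonedge
        (pairwise_fanNonedgeDisk_inter_subset hL)

end Fan

/-- For arbitrarily large `n`, there exist witness Gabriel graphs on `n`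
vertices, not empty of edges, requiring at least `(3/2)n − 8` witnesses. -/
theorem witnesses_realize_nonempty_graph_lower_bound (N : ℕ) :
    ∃ n : ℕ, N ≤ n ∧ ∃ P : Finset Pt, P.card = n ∧ ∃ W₀ : Finset Pt,
      (∃ a ∈ P, ∃ b ∈ P, a ≠ b ∧ gabrielEdge (W₀ : Set Pt) a b) ∧
      ∀ W : Finset Pt,
        (∀ a ∈ P, ∀ b ∈ P, a ≠ b →
          (gabrielEdge (W : Set Pt) a b ↔ gabrielEdge (W₀ : Set Pt) a b)) →
        (3 / 2 : ℝ) * (n : ℝ) - 8 ≤ (W.card : ℝ) := by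
  obtain ⟨L, hL⟩ : ∃ L : ℝ, 4 * ((2 * N + 1 : ℕ) : ℝ) ^ 2 ≤ L := ⟨_, le_rfl⟩
  have hL0 : L ≠ 0 := (pos_of_four_mul_sq_le hL).ne'
  have hhub : 0 ∈ fanPoints L N := Finset.mem_insert_self _ _
  have hedge : Disjoint (spokeDisk L 0) (fanWitnesses L N) :=
    (disjoint_fanEdgeRegion_fanWitnesses hL).mono_left
      (spokeDisk_subset_fanEdgeRegion (Nat.zero_le _) Even.zero)
  refine ⟨2 * N + 3, by omega, fanPoints L N, card_fanPoints hL0, fanWitnesses L N,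
    ⟨0, hhub, fanVertex L 0, fanVertex_mem_fanPoints (by omega), (fanVertex_ne_zero hL0).symm,
      gabrielEdge_iff_disjoint.2 hedge⟩, fun W hW => ?_⟩
  simp only [gabrielEdge_iff_disjoint] at hW
  have hcard : 3 * N + 2 ≤ W.card := three_mul_add_two_le_card hL
    (fun k hk => hW 0 hhub _ (fanVertex_mem_fanPoints hk) (fanVertex_ne_zero hL0).symm)
    (fun k hk => hW _ (fanVertex_mem_fanPoints (by omega)) _ (fanVertex_mem_fanPoints (by omega))
      ((fanVertex_injective hL0).ne k.lt_succ_self.ne))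
  have hcard' : 3 * (N : ℝ) + 2 ≤ W.card := by exact_mod_cast hcard
  push_cast
  linarith
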